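/- arXiv:1506.06545 — 2 statements merged into one kernel-verified Lean document; each statement's English description precedes it below -/
import Mathlib

section
/- Let n₀,n₁,n₂,n₃ ∈ ℂ and let (p(τ), A(τ)) be a pair of holomorphic functions on an open connected subset V ⊆ ℍ such that for every τ ∈ V one has 2p(τ) ∉ Λ_τ and p(τ) + ω_k/2 ∉ Λ_τ for k = 0,1,2,3. If (p, A) satisfies the Hamiltonian system, then p satisfies the elliptic form of Painlevé VI with parameters α_k = (1/2)(n_k + 1/2)², i.e. d²p/dτ² = (−1/(4π²)) Σ_{k=0}^{3} (1/2)(n_k + 1/2)² ℘′(p(τ) + ω_k/2 | τ) on V. -/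
open Complex Filter Topology Asymptotics

noncomputable section

/-- membership in the lattice `Λ_τ = ℤ + τℤ`. -/
def InLattice (τ z : ℂ) : Prop := ∃ m n : ℤ, z = (m : ℂ) + (n : ℂ) * τ

/-- the half-period generators `ω₀ = 0, ω₁ = 1, ω₂ = τ, ω₃ = 1 + τ`. -/
def halfp (τ : ℂ) : Fin 4 → ℂ := ![0, 1, τ, 1 + τ]

/-- the Weierstrass elliptic function `℘(z|τ)`. -/
def wp (τ z : ℂ) : ℂ :=
  z⁻¹ ^ 2 + ∑' w : {w : ℤ × ℤ // w ≠ 0},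
    ((z - ((w.1.1 : ℂ) + (w.1.2 : ℂ) * τ))⁻¹ ^ 2 - ((w.1.1 : ℂ) + (w.1.2 : ℂ) * τ)⁻¹ ^ 2)

/-- `℘′(z|τ)`, the `z`-derivative of `℘`. -/
def wpd (τ z : ℂ) : ℂ := deriv (wp τ) z

/-- `℘″(z|τ)`. -/
def wpdd (τ z : ℂ) : ℂ := deriv (wpd τ) z

def e1 (τ : ℂ) : ℂ := wp τ (1 / 2)
def e2 (τ : ℂ) : ℂ := wp τ (τ / 2)
def e3 (τ : ℂ) : ℂ := wp τ ((1 + τ) / 2)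

def g2 (τ : ℂ) : ℂ := -4 * (e1 τ * e2 τ + e1 τ * e3 τ + e2 τ * e3 τ)

/-- `zeta` is the Weierstrass zeta function: for each `τ ∈ ℍ`, `zeta τ` is odd, satisfies
`∂ζ/∂z = -℘` off the lattice, and `ζ(z|τ) - 1/z → 0` as `z → 0`. -/
def IsWeierstrassZeta (zeta : ℂ → ℂ → ℂ) : Prop :=
  ∀ τ : ℂ, 0 < τ.im →
    (∀ z : ℂ, zeta τ (-z) = - zeta τ z) ∧
    (∀ z : ℂ, ¬ InLattice τ z → HasDerivAt (zeta τ) (- wp τ z) z) ∧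
    Tendsto (fun z => zeta τ z - z⁻¹) (𝓝[≠] (0 : ℂ)) (𝓝 0)

/-- `eta1 τ = ζ(z+1|τ) - ζ(z|τ)` is the first quasi-period. -/
def IsEta1 (zeta : ℂ → ℂ → ℂ) (eta1 : ℂ → ℂ) : Prop :=
  ∀ τ : ℂ, 0 < τ.im → ∀ z : ℂ, ¬ InLattice τ z →
    eta1 τ = zeta τ (z + 1) - zeta τ z

/-- `eta2 τ = ζ(z+τ|τ) - ζ(z|τ)` is the second quasi-period. -/
def IsEta2 (zeta : ℂ → ℂ → ℂ) (eta2 : ℂ → ℂ) : Prop :=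
  ∀ τ : ℂ, 0 < τ.im → ∀ z : ℂ, ¬ InLattice τ z →
    eta2 τ = zeta τ (z + τ) - zeta τ z

/-- `sigma` is the Weierstrass sigma function: entire, odd, with
`∂/∂z log σ = ζ` off the lattice and `σ(z|τ)/z → 1` as `z → 0`. -/
def IsWeierstrassSigma (zeta sigma : ℂ → ℂ → ℂ) : Prop :=
  ∀ τ : ℂ, 0 < τ.im →
    (∀ z : ℂ, sigma τ (-z) = - sigma τ z) ∧
    Differentiable ℂ (sigma τ) ∧
    (∀ z : ℂ, ¬ InLattice τ z → HasDerivAt (sigma τ) (zeta τ z * sigma τ z) z) ∧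
    Tendsto (fun z => sigma τ z / z) (𝓝[≠] (0 : ℂ)) (𝓝 1)

/-- the Hamiltonian system (142) for `(p(τ), A(τ))` on `V`. -/
def HamSystem (n : Fin 4 → ℂ) (zeta : ℂ → ℂ → ℂ) (eta1 : ℂ → ℂ)
    (V : Set ℂ) (p A : ℂ → ℂ) : Prop :=
  ∀ τ ∈ V,
    HasDerivAt p ((-Complex.I / (4 * (Real.pi : ℂ))) *
      (2 * A τ - zeta τ (2 * p τ) + 2 * p τ * eta1 τ)) τ ∧
    HasDerivAt A ((Complex.I / (4 * (Real.pi : ℂ))) *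
      ((2 * wp τ (2 * p τ) + 2 * eta1 τ) * A τ - (3 / 2) * wpd τ (2 * p τ)
        - ∑ k : Fin 4, n k * (n k + 1) * wpd τ (p τ + halfp τ k / 2))) τ

/-- the generalized Lamé potential `I(z;τ)`. -/
def Ipot (n : Fin 4 → ℂ) (zeta : ℂ → ℂ → ℂ) (A B p τ z : ℂ) : ℂ :=
  (∑ k : Fin 4, n k * (n k + 1) * wp τ (z + halfp τ k / 2))
    + (3 / 4) * (wp τ (z + p) + wp τ (z - p))
    + A * (zeta τ (z + p) - zeta τ (z - p)) + B

end

/-- The period pair `(1, τ)` attached to a point `τ` of the upper half-plane. -/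
noncomputable def upperPeriodPair (τ : ℂ) (hτ : 0 < τ.im) : PeriodPair where
  ω₁ := 1
  ω₂ := τ
  indep := by
    rw [LinearIndependent.pair_iff]
    intro s t h
    have him := congrArg Complex.im h
    have hre := congrArg Complex.re h
    simp at him hre
    have ht : t = 0 := him.resolve_right hτ.ne'
    subst ht
    simpa using hre

lemma mem_upperPeriodPair_lattice {τ : ℂ} (hτ : 0 < τ.im) {z : ℂ} :
    z ∈ (upperPeriodPair τ hτ).lattice ↔ InLattice τ z := by
  rw [PeriodPair.mem_lattice]
  simp [InLattice, upperPeriodPair, eq_comm]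

lemma wp_eq_weierstrassP {τ : ℂ} (hτ : 0 < τ.im) (z : ℂ) :
    wp τ z = (upperPeriodPair τ hτ).weierstrassP z := by
  set L := upperPeriodPair τ hτ with hL
  have h := (L.latticeEquivProd.symm.toEquiv.hasSum_iff).mpr (L.hasSum_weierstrassP z)
  have hterm : ∀ w : ℤ × ℤ, ((L.latticeEquivProd.symm w : L.lattice) : ℂ) = w.1 + w.2 * τ := by
    intro w
    simpa [hL, upperPeriodPair] using L.latticeEquiv_symm_apply w
  have h2 := h.summable.tsum_subtype_add_tsum_subtype_compl {w : ℤ × ℤ | w = 0}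
  rw [h.tsum_eq] at h2
  rw [← h2, wp]
  congr 1
  · have : {w : ℤ × ℤ | w = 0} = {0} := rfl
    rw [this, tsum_singleton]
    simp
  · refine tsum_congr fun w => ?_
    simp [hterm]

lemma wpd_eq_derivWeierstrassP {τ : ℂ} (hτ : 0 < τ.im) (z : ℂ) :
    wpd τ z = (upperPeriodPair τ hτ).derivWeierstrassP z := by
  rw [wpd, ← PeriodPair.deriv_weierstrassP]
  congr 1
  exact funext (wp_eq_weierstrassP hτ)

/-- **Liouville's theorem** for elliptic functions: a doubly periodic function which is holomorphic
off the period lattice and `o(1 / z)` at the origin is constant. -/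
lemma PeriodPair.exists_eq_const_of_periodic (L : PeriodPair) {f : ℂ → ℂ}
    (hd : DifferentiableOn ℂ f (L.lattice : Set ℂ)ᶜ)
    (hper : ∀ z ∉ L.lattice, ∀ l ∈ L.lattice, f (z + l) = f z)
    (ho : f =o[𝓝[≠] 0] fun z => z⁻¹) : ∃ K, ∀ z ∉ L.lattice, f z = K := by
  classical
  set c : ℂ := limUnder (𝓝[≠] 0) f
  set g : ℂ → ℂ := fun z => if z ∈ L.lattice then c else f z with hg
  have hgper : ∀ z, ∀ l ∈ L.lattice, g (z + l) = g z := by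
    intro z l hl
    by_cases hz : z ∈ L.lattice
    · simp [hg, hz, add_mem hz hl]
    · have : z + l ∉ L.lattice := fun h => hz (by simpa using sub_mem h hl)
      simp [hg, hz, this, hper z hz l hl]
  have hopen : IsOpen (L.lattice : Set ℂ)ᶜ := L.isClosed_lattice.isOpen_compl
  have hs : ((L.lattice : Set ℂ) \ {0})ᶜ ∈ 𝓝 (0 : ℂ) :=
    L.compl_lattice_sdiff_singleton_mem_nhds 0
  have hc1 : (fun _ : ℂ => f 0) =o[𝓝[≠] 0] fun z : ℂ => z⁻¹ := by
    have h1 : Tendsto (fun z : ℂ => ‖z⁻¹‖) (𝓝[≠] 0) atTop := by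
      simpa only [norm_inv] using tendsto_norm_inv_nhdsNE_zero_atTop (α := ℂ)
    exact isLittleO_const_left.mpr (Or.inr h1)
  have h0 : DifferentiableAt ℂ g 0 := by
    have h := Complex.differentiableOn_update_limUnder_of_isLittleO (f := f) hs
      (hd.mono fun z hz hzl => hz.1 ⟨hzl, hz.2⟩) (by simpa using ho.sub hc1)
    refine (h.differentiableAt hs).congr_of_eventuallyEq ?_
    filter_upwards [hs] with z hz
    by_cases hz0 : z = 0
    · subst hz0; simp [hg, c]
    · have : z ∉ L.lattice := fun h => hz ⟨h, hz0⟩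
      simp [hg, this, hz0]
  have hdiff : Differentiable ℂ g := by
    intro z
    by_cases hz : z ∈ L.lattice
    · have he : g = fun x => g (x - z) := by
        funext x
        rw [← hgper (x - z) z hz, sub_add_cancel]
      rw [he]
      exact DifferentiableAt.comp (g := g) z (by simpa using h0) (by fun_prop)
    · refine (hd.differentiableAt (hopen.mem_nhds hz)).congr_of_eventuallyEq ?_
      filter_upwards [hopen.mem_nhds hz] with w hw
      have : w ∉ L.lattice := hw
      simp [hg, this]
  refine ⟨g 0, fun z hz => ?_⟩
  have hb := (IsZLattice.isCompact_range_of_periodic L.lattice g hdiff.continuous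
    fun z w hw => hgper z w hw).isBounded
  have := hdiff.apply_eq_apply_of_bounded hb z 0
  rw [← this]
  simp [hg, hz]

/-- The function `π cot(πw)`, written in terms of `exp(2πiw)`. -/
noncomputable def piCot (w : ℂ) : ℂ :=
  Real.pi * I * (exp (2 * Real.pi * I * w) + 1) / (exp (2 * Real.pi * I * w) - 1)

lemma exp_two_pi_I_mul_eq_one_iff (w : ℂ) :
    exp (2 * Real.pi * I * w) = 1 ↔ ∃ m : ℤ, w = m := by
  rw [Complex.exp_eq_one_iff]
  refine exists_congr fun m => ?_
  rw [mul_comm (m : ℂ), mul_right_inj' two_pi_I_ne_zero]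

lemma piCot_neg (w : ℂ) : piCot (-w) = -piCot w := by
  have h : exp (2 * Real.pi * I * -w) = (exp (2 * Real.pi * I * w))⁻¹ := by
    rw [← Complex.exp_neg]; ring_nf
  have h0 := Complex.exp_ne_zero (2 * Real.pi * I * w)
  simp only [piCot, h]
  set e := exp (2 * Real.pi * I * w)
  by_cases he : e = 1
  · simp [he]
  · have h1 : e - 1 ≠ 0 := sub_ne_zero.mpr he
    have h2 : e⁻¹ - 1 ≠ 0 := by
      rw [sub_ne_zero]; simpa using he
    rw [← neg_div, div_eq_div_iff h2 h1]
    field_simp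
    ring

lemma piCot_add_one (w : ℂ) : piCot (w + 1) = piCot w := by
  have h : exp (2 * Real.pi * I * (w + 1)) = exp (2 * Real.pi * I * w) := by
    rw [mul_add, mul_one, Complex.exp_add, Complex.exp_two_pi_mul_I, mul_one]
  simp only [piCot, h]

lemma hasDerivAt_piCot {w : ℂ} (hw : ∀ m : ℤ, w ≠ m) :
    HasDerivAt piCot (-(Real.pi : ℂ) ^ 2 - piCot w ^ 2) w := by
  have h1 : exp (2 * Real.pi * I * w) - 1 ≠ 0 := by
    rw [sub_ne_zero, Ne, exp_two_pi_I_mul_eq_one_iff]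
    push Not
    exact hw
  have he : HasDerivAt (fun w : ℂ => exp (2 * Real.pi * I * w))
      (exp (2 * Real.pi * I * w) * (2 * Real.pi * I)) w := by
    simpa using ((hasDerivAt_id w).const_mul (2 * Real.pi * I : ℂ)).cexp
  have h := ((he.add_const 1).const_mul (Real.pi * I : ℂ)).div (he.sub_const 1) h1
  convert! h using 1
  simp only [piCot]
  set e := exp (2 * Real.pi * I * w)
  field_simp
  ring_nf
  simp only [I_sq]
  ring

lemma norm_piCot_add_le {w : ℂ} (hw : 1 ≤ w.im) :
    ‖piCot w + Real.pi * I‖ ≤ 4 * Real.pi * Real.exp (-(2 * Real.pi * w.im)) := by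
  have hne : ‖exp (2 * Real.pi * I * w)‖ = Real.exp (-(2 * Real.pi * w.im)) := by
    rw [Complex.norm_exp]
    simp
  have hsmall : Real.exp (-(2 * Real.pi * w.im)) ≤ 1 / 2 := by
    have h1 := Real.add_one_le_exp (2 * Real.pi * w.im)
    have h2 : 2 ≤ Real.exp (2 * Real.pi * w.im) := by nlinarith [Real.pi_gt_three]
    rw [Real.exp_neg, one_div]
    exact inv_anti₀ (by norm_num) h2
  simp only [piCot]
  rw [← hne] at hsmall ⊢
  set e := exp (2 * Real.pi * I * w)
  have h2 : 1 / 2 ≤ ‖e - 1‖ := by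
    have := norm_sub_norm_le 1 e
    rw [norm_one, norm_sub_rev] at this
    linarith
  have h3 : e - 1 ≠ 0 := norm_pos_iff.mp (by linarith)
  have h4 : Real.pi * I * (e + 1) / (e - 1) + Real.pi * I = 2 * Real.pi * I * e / (e - 1) := by
    field_simp; ring
  rw [h4, norm_div, div_le_iff₀ (by linarith)]
  simp only [norm_mul, norm_I, Complex.norm_real, Complex.norm_ofNat, mul_one, Real.norm_eq_abs,
    abs_of_pos Real.pi_pos]
  nlinarith [mul_nonneg Real.pi_pos.le (norm_nonneg e)]

lemma norm_piCot_sub_le {w : ℂ} (hw : w.im ≤ -1) :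
    ‖piCot w - Real.pi * I‖ ≤ 4 * Real.pi * Real.exp (2 * Real.pi * w.im) := by
  have h := norm_piCot_add_le (w := -w) (by simpa using by linarith)
  rw [piCot_neg, neg_add_eq_sub, norm_sub_rev] at h
  simpa using h

lemma tendsto_mul_piCot : Tendsto (fun z => z * piCot z) (𝓝[≠] 0) (𝓝 1) := by
  have he : HasDerivAt (fun w : ℂ => exp (2 * Real.pi * I * w)) (2 * Real.pi * I) 0 := by
    simpa using ((hasDerivAt_id (0 : ℂ)).const_mul (2 * Real.pi * I : ℂ)).cexp
  have h1 := hasDerivAt_iff_tendsto_slope_zero.mp he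
  have h2 : Tendsto (fun z : ℂ => Real.pi * I * (exp (2 * Real.pi * I * z) + 1)) (𝓝[≠] 0)
      (𝓝 (Real.pi * I * (exp (2 * Real.pi * I * 0) + 1))) :=
    (Continuous.tendsto (by fun_prop) _).mono_left nhdsWithin_le_nhds
  have h3 := h2.div h1 two_pi_I_ne_zero
  have h4 : (Real.pi * I * (exp (2 * Real.pi * I * 0) + 1)) / (2 * Real.pi * I) = 1 := by
    have := two_pi_I_ne_zero
    rw [div_eq_one_iff_eq this]
    simp
    ring
  rw [h4] at h3
  refine h3.congr fun z => ?_
  simp only [Pi.div_apply, piCot, zero_add, mul_zero, Complex.exp_zero, smul_eq_mul,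
    div_eq_mul_inv, mul_inv, inv_inv]
  ring

lemma eventually_ne_intCast : ∀ᶠ z : ℂ in 𝓝[≠] 0, ∀ m : ℤ, z ≠ m := by
  have h : Metric.ball (0 : ℂ) 1 ∈ 𝓝[≠] (0 : ℂ) :=
    mem_nhdsWithin_of_mem_nhds (Metric.ball_mem_nhds _ one_pos)
  filter_upwards [h, self_mem_nhdsWithin] with z hz hz0 m hm
  subst hm
  have : ‖(m : ℂ)‖ < 1 := by simpa using hz
  rw [Complex.norm_intCast] at this
  have hm : |m| < 1 := by exact_mod_cast this
  exact hz0 (by simpa using Int.abs_lt_one_iff.mp hm)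

lemma tendsto_piCot_sub_inv : Tendsto (fun z => piCot z - z⁻¹) (𝓝[≠] 0) (𝓝 0) := by
  set m : ℂ → ℂ := Function.update (fun z => z * piCot z) 0 1 with hm
  have hcont : ContinuousAt m 0 := continuousAt_update_same.mpr tendsto_mul_piCot
  have hdiff : DifferentiableAt ℂ m 0 := by
    refine (Complex.analyticAt_of_differentiable_on_punctured_nhds_of_continuousAt ?_
      hcont).differentiableAt
    filter_upwards [eventually_ne_intCast, self_mem_nhdsWithin] with z hz hz0
    refine (differentiableAt_id.mul (hasDerivAt_piCot hz).differentiableAt).congr_of_eventuallyEq ?_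
    filter_upwards [isOpen_ne.mem_nhds hz0] with w hw
    simp [hm, Function.update_of_ne hw]
  have h1 := hasDerivAt_iff_tendsto_slope_zero.mp hdiff.hasDerivAt
  have h2 : Tendsto (fun z => piCot z - z⁻¹) (𝓝[≠] 0) (𝓝 (deriv m 0)) := by
    refine h1.congr' ?_
    filter_upwards [self_mem_nhdsWithin] with z hz
    have hz : z ≠ 0 := hz
    simp [hm, Function.update_of_ne hz]
    field_simp
  have hneg : Tendsto (fun z : ℂ => -z) (𝓝[≠] 0) (𝓝[≠] 0) := by
    refine tendsto_nhdsWithin_of_tendsto_nhds_of_eventually_within _ ?_ ?_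
    · exact ((continuous_neg.tendsto' (0 : ℂ) 0 (by simp))).mono_left nhdsWithin_le_nhds
    · filter_upwards [self_mem_nhdsWithin] with z hz
      simpa using hz
  have h3 := (h2.comp hneg).neg
  have h4 : Tendsto (fun z => piCot z - z⁻¹) (𝓝[≠] 0) (𝓝 (-deriv m 0)) := by
    refine h3.congr fun z => ?_
    simp [piCot_neg, inv_neg]
    ring
  have h5 := tendsto_nhds_unique h2 h4
  rwa [CharZero.eq_neg_self_iff.mp h5] at h2

/-- The `n`-th term `π cot(π(z + nτ)) + πi sgn(n)` of the row-summed zeta function. -/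
noncomputable def rowTerm (n : ℤ) (τ z : ℂ) : ℂ := piCot (z + n * τ) + Real.pi * I * (n.sign : ℂ)

/-- The weighted series `∑ₙ cₙ (π cot(π(z + nτ)) + πi sgn(n))`. -/
noncomputable def rowSeries (c : ℤ → ℂ) (τ z : ℂ) : ℂ := ∑' n : ℤ, c n * rowTerm n τ z

lemma norm_rowTerm_le {n : ℤ} {τ z : ℂ} {M δ : ℝ} (hz : |z.im| ≤ M) (hδ : 0 < δ)
    (hτ : δ ≤ τ.im) (hM : 0 ≤ M) (hn : M + 1 ≤ |(n : ℝ)| * δ) :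
    ‖rowTerm n τ z‖ ≤
      4 * Real.pi * Real.exp (2 * Real.pi * M) * Real.exp (-(2 * Real.pi * δ) * |(n : ℝ)|) := by
  have him : (z + n * τ).im = z.im + n * τ.im := by simp
  have hz' := abs_le.mp hz
  have hpi := Real.pi_pos
  rcases lt_trichotomy n 0 with h | h | h
  · have hneg : (n : ℝ) < 0 := by exact_mod_cast h
    rw [abs_of_neg hneg] at hn ⊢
    have h1 : (z + n * τ).im ≤ M + n * δ := by rw [him]; nlinarith
    have h2 := norm_piCot_sub_le (w := z + n * τ) (by linarith)
    rw [rowTerm, Int.sign_eq_neg_one_of_neg h]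
    push_cast
    rw [mul_neg_one, ← sub_eq_add_neg]
    refine h2.trans ?_
    rw [mul_assoc _ (Real.exp _), ← Real.exp_add]
    gcongr
    nlinarith
  · subst h
    simp at hn
    linarith
  · have hpos : (0 : ℝ) < n := by exact_mod_cast h
    rw [abs_of_pos hpos] at hn ⊢
    have h1 : n * δ - M ≤ (z + n * τ).im := by rw [him]; nlinarith
    have h2 := norm_piCot_add_le (w := z + n * τ) (by linarith)
    rw [rowTerm, Int.sign_eq_one_of_pos h]
    push_cast
    rw [mul_one]
    refine h2.trans ?_
    rw [mul_assoc _ (Real.exp _), ← Real.exp_add]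
    gcongr
    nlinarith

lemma summable_abs_add_one_mul_exp {r : ℝ} (hr : 0 < r) :
    Summable fun n : ℤ => (|(n : ℝ)| + 1) * Real.exp (-r * |(n : ℝ)|) := by
  have h1 : Summable fun n : ℕ => ((n : ℝ) + 1) * Real.exp (-r * n) := by
    simpa [add_mul] using (Real.summable_pow_mul_exp_neg_nat_mul 1 hr).add
      (Real.summable_pow_mul_exp_neg_nat_mul 0 hr)
  exact Summable.of_nat_of_neg (by simpa using h1) (by simpa using h1)

lemma summableLocallyUniformlyOn_rowTerm {c : ℤ → ℂ} (hc : ∀ n, ‖c n‖ ≤ |(n : ℝ)| + 1)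
    {a b : ℂ → ℂ} {U : Set ℂ}
    (hU : IsOpen U) (ha : ContinuousOn a U)
    (hb : ContinuousOn b U) (him : ∀ s ∈ U, 0 < (b s).im) :
    SummableLocallyUniformlyOn (fun n s => c n * rowTerm n (b s) (a s)) U := by
  refine SummableLocallyUniformlyOn.of_locally_bounded_eventually hU fun K hK hKc => ?_
  rcases K.eq_empty_or_nonempty with rfl | hne
  · exact ⟨0, summable_zero, by simp⟩
  obtain ⟨s₁, hs₁, hmin⟩ := hKc.exists_isMinOn hne
    (Complex.continuous_im.comp_continuousOn (hb.mono hK))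
  obtain ⟨s₂, hs₂, hmax⟩ := hKc.exists_isMaxOn hne
    ((Complex.continuous_im.comp_continuousOn (ha.mono hK)).abs)
  set δ := (b s₁).im
  set M := |(a s₂).im|
  have hδ : 0 < δ := him s₁ (hK hs₁)
  refine ⟨fun n => 4 * Real.pi * Real.exp (2 * Real.pi * M) *
    ((|(n : ℝ)| + 1) * Real.exp (-(2 * Real.pi * δ) * |(n : ℝ)|)),
    (summable_abs_add_one_mul_exp (by positivity)).mul_left _, ?_⟩
  have hlarge : ∀ᶠ n : ℤ in cofinite, M + 1 ≤ |(n : ℝ)| * δ := by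
    have : Tendsto (fun n : ℤ => |(n : ℝ)|) cofinite atTop :=
      (tendsto_norm_cocompact_atTop (E := ℝ)).comp Int.tendsto_coe_cofinite
    exact (this.atTop_mul_const hδ).eventually_ge_atTop _
  filter_upwards [hlarge] with n hn s hs
  rw [norm_mul]
  have h := norm_rowTerm_le (n := n) (M := M) (δ := δ) (hmax hs) hδ (hmin hs) (abs_nonneg _) hn
  calc _ ≤ (|(n : ℝ)| + 1) * _ := mul_le_mul (hc n) h (norm_nonneg _) (by positivity)
    _ = _ := by ring

lemma summable_rowTerm {c : ℤ → ℂ} (hc : ∀ n, ‖c n‖ ≤ |(n : ℝ)| + 1)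
    {τ : ℂ} (hτ : 0 < τ.im) (z : ℂ) :
    Summable fun n => c n * rowTerm n τ z :=
  (summableLocallyUniformlyOn_rowTerm (a := fun _ => z) (b := fun _ => τ) hc isOpen_univ
    continuousOn_const continuousOn_const fun _ _ => hτ).summable (Set.mem_univ 0)

lemma hasDerivAt_rowSeries_comp {c : ℤ → ℂ} (hc : ∀ n, ‖c n‖ ≤ |(n : ℝ)| + 1)
    {a b : ℂ → ℂ} {U : Set ℂ}
    (hU : IsOpen U) (ha : DifferentiableOn ℂ a U)
    (hb : DifferentiableOn ℂ b U) (him : ∀ s ∈ U, 0 < (b s).im)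
    (hreg : ∀ n, c n ≠ 0 → ∀ s ∈ U, ∀ m : ℤ, a s + n * b s ≠ m) {s : ℂ} (hs : s ∈ U) :
    ∃ D, HasSum (fun n => c n * ((-(Real.pi : ℂ) ^ 2 - piCot (a s + n * b s) ^ 2) *
      (deriv a s + n * deriv b s))) D ∧ HasDerivAt (fun s => rowSeries c (b s) (a s)) D s := by
  have hterm : ∀ n, ∀ s ∈ U, HasDerivAt (fun s => c n * rowTerm n (b s) (a s))
      (c n * ((-(Real.pi : ℂ) ^ 2 - piCot (a s + n * b s) ^ 2) *
      (deriv a s + n * deriv b s))) s := by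
    intro n s hs
    by_cases hcn : c n = 0
    · simpa [hcn] using hasDerivAt_const s (0 : ℂ)
    have hda := (ha.differentiableAt (hU.mem_nhds hs)).hasDerivAt
    have hdb := (hb.differentiableAt (hU.mem_nhds hs)).hasDerivAt
    exact (((hasDerivAt_piCot (hreg n hcn s hs)).comp s
      (hda.add (hdb.const_mul (n : ℂ)))).add_const _).const_mul _
  have hS := summableLocallyUniformlyOn_rowTerm hc hU ha.continuousOn hb.continuousOn him
  have hfin : ∀ t : Finset ℤ, DifferentiableOn ℂ
      (fun s => ∑ n ∈ t, c n * rowTerm n (b s) (a s)) U := fun t =>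
    DifferentiableOn.fun_sum fun n _ s hs => (hterm n s hs).differentiableAt.differentiableWithinAt
  have hlim := hasSumLocallyUniformlyOn_iff_tendstoLocallyUniformlyOn.mp
    hS.hasSumLocallyUniformlyOn
  have hder := (hlim.deriv (Eventually.of_forall hfin) hU).tendsto_at hs
  have hdiff := (hlim.differentiableOn (Eventually.of_forall hfin) hU).differentiableAt
    (hU.mem_nhds hs)
  refine ⟨_, ?_, hdiff.hasDerivAt⟩
  refine hder.congr fun t => ?_
  exact (HasDerivAt.fun_sum fun n _ => hterm n s hs).deriv

lemma exists_eq_const_of_doubly_periodic {τ : ℂ} (hτ : 0 < τ.im) {f : ℂ → ℂ}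
    (hd : ∀ z, ¬ InLattice τ z → DifferentiableAt ℂ f z) (h₁ : Function.Periodic f 1)
    (h₂ : Function.Periodic f τ) (h₀ : Tendsto (fun z => z * f z) (𝓝[≠] 0) (𝓝 0)) :
    ∃ K, ∀ z, ¬ InLattice τ z → f z = K := by
  have h := (upperPeriodPair τ hτ).exists_eq_const_of_periodic (f := f) ?_ ?_ ?_
  · simpa only [mem_upperPeriodPair_lattice] using h
  · exact fun z hz => (hd z fun hl => hz
      ((mem_upperPeriodPair_lattice hτ).mpr hl)).differentiableWithinAt
  · intro z _ l hl
    obtain ⟨m, n, rfl⟩ := (mem_upperPeriodPair_lattice hτ).mp hl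
    have hm : Function.Periodic f (m : ℂ) := by simpa using h₁.int_mul m
    rw [← add_assoc, h₂.int_mul n, hm]
  · rw [isLittleO_iff_tendsto']
    · simpa [div_eq_mul_inv, mul_comm] using h₀
    · filter_upwards [self_mem_nhdsWithin] with z hz hz'
      exact absurd (inv_eq_zero.mp hz') hz

lemma add_mul_ne_intCast_of_not_inLattice {τ z : ℂ} (hz : ¬ InLattice τ z) (n m : ℤ) :
    z + n * τ ≠ m := fun h => hz ⟨m, -n, by push_cast; linear_combination h⟩

lemma differentiableAt_rowSeries {c : ℤ → ℂ} (hc : ∀ n, ‖c n‖ ≤ |(n : ℝ)| + 1) {τ : ℂ}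
    (hτ : 0 < τ.im) {z : ℂ} (hz : ∀ n, c n ≠ 0 → ∀ m : ℤ, z + n * τ ≠ m) :
    HasSum (fun n => c n * (-(Real.pi : ℂ) ^ 2 - piCot (z + n * τ) ^ 2)) (deriv (rowSeries c τ) z) ∧
      AnalyticAt ℂ (rowSeries c τ) z := by
  set U : Set ℂ := {w | ∃ n, c n ≠ 0 ∧ ∃ m : ℤ, w + n * τ = m}ᶜ with hU
  have hopen : IsOpen U := by
    refine ((upperPeriodPair τ hτ).isClosed_of_subset_lattice ?_).isOpen_compl
    rintro w ⟨n, -, m, h⟩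
    exact (mem_upperPeriodPair_lattice hτ).mpr ⟨m, -n, by push_cast; linear_combination h⟩
  have key : ∀ w ∈ U, HasSum (fun n => c n * (-(Real.pi : ℂ) ^ 2 - piCot (w + n * τ) ^ 2))
      (deriv (rowSeries c τ) w) ∧ DifferentiableAt ℂ (rowSeries c τ) w := by
    intro w hw
    obtain ⟨D, hD, hd⟩ := hasDerivAt_rowSeries_comp (a := fun s => s) (b := fun _ => τ) hc hopen
      differentiableOn_id (differentiableOn_const _) (fun _ _ => hτ)
      (fun n hn s hs m h => hs ⟨n, hn, m, h⟩) hw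
    refine ⟨?_, hd.differentiableAt⟩
    have hd' : deriv (rowSeries c τ) w = D := hd.deriv
    rw [hd']
    simpa using hD
  have hzU : z ∈ U := fun ⟨n, hn, m, h⟩ => hz n hn m h
  refine ⟨(key z hzU).1, ?_⟩
  exact DifferentiableOn.analyticAt (s := U)
    (fun w hw => (key w hw).2.differentiableWithinAt) (hopen.mem_nhds hzU)

lemma rowTerm_add_one (n : ℤ) (τ z : ℂ) : rowTerm n τ (z + 1) = rowTerm n τ z := by
  rw [rowTerm, rowTerm, add_right_comm, piCot_add_one]

lemma periodic_rowSeries (c : ℤ → ℂ) (τ : ℂ) : Function.Periodic (rowSeries c τ) 1 := fun z => by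
  simp only [rowSeries, rowTerm_add_one]

lemma rowTerm_add_tau (n : ℤ) (τ z : ℂ) : rowTerm n τ (z + τ) =
    rowTerm (n + 1) τ z + Real.pi * I * ((n.sign : ℂ) - ((n + 1).sign : ℂ)) := by
  have : z + τ + n * τ = z + ((n + 1 : ℤ) : ℂ) * τ := by push_cast; ring
  rw [rowTerm, rowTerm, this]
  ring

lemma rowTerm_neg (n : ℤ) (τ z : ℂ) : rowTerm n τ (-z) = -rowTerm (-n) τ z := by
  have : -z + n * τ = -(z + ((-n : ℤ) : ℂ) * τ) := by push_cast; ring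
  rw [rowTerm, rowTerm, this, piCot_neg, Int.sign_neg]
  push_cast
  ring

lemma hasSum_mul_sign_sub_sign (c : ℤ → ℂ) :
    HasSum (fun n : ℤ => c n * (Real.pi * I * ((n.sign : ℂ) - ((n + 1).sign : ℂ))))
      (-(Real.pi * I) * (c (-1) + c 0)) := by
  have h := hasSum_sum_of_ne_finset_zero (L := SummationFilter.unconditional ℤ)
    (f := fun n : ℤ => c n * (Real.pi * I * ((n.sign : ℂ) - ((n + 1).sign : ℂ))))
    (s := {-1, 0}) fun n hn => by
      simp only [Finset.mem_insert, Finset.mem_singleton, not_or] at hn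
      rcases lt_or_ge n 0 with h | h
      · rw [Int.sign_eq_neg_one_of_neg h, Int.sign_eq_neg_one_of_neg (by omega)]
        simp
      · rw [Int.sign_eq_one_of_pos (by omega), Int.sign_eq_one_of_pos (by omega)]
        simp
  convert! h using 1
  rw [Finset.sum_pair (by decide)]
  simp
  ring

lemma norm_one_le_abs_add_one (n : ℤ) : ‖(1 : ℂ)‖ ≤ |(n : ℝ)| + 1 := by
  rw [norm_one]
  linarith [abs_nonneg (n : ℝ)]

lemma norm_intCast_le_abs_add_one (n : ℤ) : ‖(n : ℂ)‖ ≤ |(n : ℝ)| + 1 := by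
  rw [Complex.norm_intCast]
  linarith

lemma norm_ite_le_abs_add_one (n : ℤ) : ‖(if n = 0 then 0 else 1 : ℂ)‖ ≤ |(n : ℝ)| + 1 := by
  split_ifs
  · rw [norm_zero]; positivity
  · exact norm_one_le_abs_add_one n

/-- The Weierstrass zeta function with its quasi-period along `1` removed, as a sum over the rows
of the lattice. -/
noncomputable def rowZeta (τ z : ℂ) : ℂ := rowSeries (fun _ => 1) τ z

/-- The regular part `rowZeta τ z - π cot(πz)` of `rowZeta` at the origin. -/
noncomputable def rowZetaReg (τ z : ℂ) : ℂ := rowSeries (fun n => if n = 0 then 0 else 1) τ z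

/-- The moment series `∑ₙ n (π cot(π(z + nτ)) + πi sgn(n))`. -/
noncomputable def rowMoment (τ z : ℂ) : ℂ := rowSeries (fun n => n) τ z

lemma rowZeta_add_tau {τ : ℂ} (hτ : 0 < τ.im) (z : ℂ) :
    rowZeta τ (z + τ) = rowZeta τ z - 2 * Real.pi * I := by
  have h1 := (Equiv.addRight (1 : ℤ)).hasSum_iff.mpr
    (summable_rowTerm norm_one_le_abs_add_one hτ z).hasSum
  have h2 := h1.add (hasSum_mul_sign_sub_sign fun _ => 1)
  refine (tsum_congr fun n => ?_).trans (h2.tsum_eq.trans ?_)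
  · rw [rowTerm_add_tau]
    simp
  · rw [rowZeta, rowSeries]
    ring

lemma rowMoment_add_tau {τ : ℂ} (hτ : 0 < τ.im) (z : ℂ) :
    rowMoment τ (z + τ) = rowMoment τ z - rowZeta τ z + Real.pi * I := by
  have h0 := (Equiv.addRight (1 : ℤ)).hasSum_iff.mpr
    (summable_rowTerm norm_intCast_le_abs_add_one hτ z).hasSum
  have h1 := (Equiv.addRight (1 : ℤ)).hasSum_iff.mpr
    (summable_rowTerm norm_one_le_abs_add_one hτ z).hasSum
  have h2 := (h0.sub h1).add (hasSum_mul_sign_sub_sign fun n => n)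
  refine (tsum_congr fun n => ?_).trans (h2.tsum_eq.trans ?_)
  · rw [rowTerm_add_tau]
    simp
    ring
  · rw [rowZeta, rowMoment, rowSeries, rowSeries]
    push_cast
    ring

lemma rowZeta_neg (τ z : ℂ) : rowZeta τ (-z) = -rowZeta τ z := by
  simp only [rowZeta, rowSeries, rowTerm_neg, one_mul, tsum_neg]
  rw [← (Equiv.neg ℤ).tsum_eq fun n => rowTerm n τ z]
  simp

lemma rowZetaReg_zero (τ : ℂ) : rowZetaReg τ 0 = 0 := by
  rw [← CharZero.eq_neg_self_iff, rowZetaReg, rowSeries, ← tsum_neg, ← (Equiv.neg ℤ).tsum_eq]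
  refine tsum_congr fun n => ?_
  have := rowTerm_neg n τ 0
  rw [neg_zero] at this
  simp [this]

lemma rowZeta_eq {τ : ℂ} (hτ : 0 < τ.im) (z : ℂ) : rowZeta τ z = piCot z + rowZetaReg τ z := by
  rw [rowZeta, rowSeries, (summable_rowTerm norm_one_le_abs_add_one hτ z).tsum_eq_add_tsum_ite 0,
    rowZetaReg, rowSeries]
  congr 1
  · simp [rowTerm]
  · refine tsum_congr fun n => ?_
    split_ifs <;> simp

lemma add_mul_ne_intCast_of_ne_zero {τ : ℂ} (hτ : 0 < τ.im) {n : ℤ} (hn : n ≠ 0) (m : ℤ) :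
    (0 : ℂ) + n * τ ≠ m := fun h => by
  have := congrArg Complex.im h
  simp [hn, hτ.ne'] at this

lemma analyticAt_rowZeta {τ z : ℂ} (hτ : 0 < τ.im) (hz : ¬ InLattice τ z) :
    AnalyticAt ℂ (rowZeta τ) z :=
  (differentiableAt_rowSeries norm_one_le_abs_add_one hτ
    fun n _ => add_mul_ne_intCast_of_not_inLattice hz n).2

lemma analyticAt_rowMoment {τ z : ℂ} (hτ : 0 < τ.im) (hz : ¬ InLattice τ z) :
    AnalyticAt ℂ (rowMoment τ) z :=
  (differentiableAt_rowSeries norm_intCast_le_abs_add_one hτ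
    fun n _ => add_mul_ne_intCast_of_not_inLattice hz n).2

lemma analyticAt_rowMoment_zero {τ : ℂ} (hτ : 0 < τ.im) : AnalyticAt ℂ (rowMoment τ) 0 :=
  (differentiableAt_rowSeries norm_intCast_le_abs_add_one hτ
    fun _ hn => add_mul_ne_intCast_of_ne_zero hτ (by simpa using hn)).2

lemma analyticAt_rowZetaReg_zero {τ : ℂ} (hτ : 0 < τ.im) : AnalyticAt ℂ (rowZetaReg τ) 0 :=
  (differentiableAt_rowSeries norm_ite_le_abs_add_one hτ
    fun _ hn => add_mul_ne_intCast_of_ne_zero hτ (by simpa using hn)).2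

lemma eventually_deriv_rowZeta {τ : ℂ} (hτ : 0 < τ.im) : ∀ᶠ z in 𝓝[≠] (0 : ℂ),
    deriv (rowZeta τ) z = -(Real.pi : ℂ) ^ 2 - piCot z ^ 2 + deriv (rowZetaReg τ) z := by
  have h := (analyticAt_rowZetaReg_zero hτ).eventually_analyticAt
  filter_upwards [eventually_ne_intCast, mem_nhdsWithin_of_mem_nhds h] with z hz hR
  rw [funext (rowZeta_eq hτ)]
  exact ((hasDerivAt_piCot hz).add hR.differentiableAt.hasDerivAt).deriv

lemma periodic_deriv_of_add_const {f : ℂ → ℂ} {w k : ℂ} (h : ∀ z, f (z + w) = f z + k) :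
    Function.Periodic (deriv f) w := fun z => by
  rw [← deriv_comp_add_const, funext h, deriv_add_const]

lemma tendsto_id_mul_of_continuousAt {f : ℂ → ℂ} (hf : ContinuousAt f 0) :
    Tendsto (fun z => z * f z) (𝓝[≠] 0) (𝓝 0) := by
  have h : ContinuousAt (fun z => z * f z) 0 := continuousAt_id.mul hf
  simpa [ContinuousAt] using h.tendsto.mono_left nhdsWithin_le_nhds

/-- The heat equation for `log θ₁`, in integrated form. -/
lemma exists_rowMoment_eq {τ : ℂ} (hτ : 0 < τ.im) : ∃ K, ∀ z, ¬ InLattice τ z →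
    rowMoment τ z + I / (4 * Real.pi) * (deriv (rowZeta τ) z + rowZeta τ z ^ 2) = K := by
  have hpi : (Real.pi : ℂ) ≠ 0 := by exact_mod_cast Real.pi_ne_zero
  have hone : Function.Periodic (rowZeta τ) 1 := periodic_rowSeries _ _
  refine exists_eq_const_of_doubly_periodic hτ ?_ ?_ ?_ ?_
  · intro z hz
    have hE := analyticAt_rowZeta hτ hz
    exact (analyticAt_rowMoment hτ hz).differentiableAt.add
      ((hE.deriv.differentiableAt.add (hE.differentiableAt.pow 2)).const_mul _)
  · intro z
    have h := periodic_deriv_of_add_const (f := rowZeta τ) (w := 1) (k := 0)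
      fun z => by rw [hone z, add_zero]
    have hm : rowMoment τ (z + 1) = rowMoment τ z := periodic_rowSeries _ _ z
    simp only [h z, hone z, hm]
  · intro z
    have h := periodic_deriv_of_add_const (f := rowZeta τ) (w := τ) (k := -(2 * Real.pi * I)) fun z => by
      rw [rowZeta_add_tau hτ z, sub_eq_add_neg]
    simp only [h z, rowMoment_add_tau hτ, rowZeta_add_tau hτ]
    field_simp
    ring_nf
    simp only [I_sq, show I ^ 3 = -I by rw [pow_succ, I_sq]; ring]
    ring
  · have hR := analyticAt_rowZetaReg_zero hτ
    have h1 := tendsto_id_mul_of_continuousAt (f := fun z => rowMoment τ z + I / (4 * Real.pi) *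
      (-(Real.pi : ℂ) ^ 2 + deriv (rowZetaReg τ) z + rowZetaReg τ z ^ 2))
      ((analyticAt_rowMoment_zero hτ).continuousAt.add (continuousAt_const.mul
        ((continuousAt_const.add hR.deriv.continuousAt).add (hR.continuousAt.pow 2))))
    have h2 : Tendsto (rowZetaReg τ) (𝓝[≠] 0) (𝓝 0) := by
      have := hR.continuousAt.tendsto.mono_left (nhdsWithin_le_nhds (s := {0}ᶜ))
      rwa [rowZetaReg_zero] at this
    have h3 := h1.add ((tendsto_mul_piCot.mul h2).const_mul (I / (4 * Real.pi) * 2))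
    simp only [mul_zero, add_zero] at h3
    refine h3.congr' ?_
    filter_upwards [eventually_deriv_rowZeta hτ] with z hz
    rw [hz, rowZeta_eq hτ]
    ring

lemma exists_deriv_rowZeta_add_wp {τ : ℂ} (hτ : 0 < τ.im) :
    ∃ K, ∀ z, ¬ InLattice τ z → deriv (rowZeta τ) z + wp τ z = K := by
  set L := upperPeriodPair τ hτ with hL
  have hone : Function.Periodic (rowZeta τ) 1 := periodic_rowSeries _ _
  have hwp : wp τ = L.weierstrassP := funext (wp_eq_weierstrassP hτ)
  rw [hwp]
  refine exists_eq_const_of_doubly_periodic hτ ?_ ?_ ?_ ?_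
  · intro z hz
    refine (analyticAt_rowZeta hτ hz).deriv.differentiableAt.add
      (L.analyticOnNhd_weierstrassP z ?_).differentiableAt
    exact fun h => hz ((mem_upperPeriodPair_lattice hτ).mp h)
  · exact (periodic_deriv_of_add_const (k := 0) fun z => by rw [hone z, add_zero]).add
      (L.periodic_weierstrassP ⟨L.ω₁, L.ω₁_mem_lattice⟩)
  · exact (periodic_deriv_of_add_const (k := -(2 * Real.pi * I)) fun z => by
      rw [rowZeta_add_tau hτ z, sub_eq_add_neg]).add
      (L.periodic_weierstrassP ⟨L.ω₂, L.ω₂_mem_lattice⟩)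
  · have h1 := tendsto_id_mul_of_continuousAt (f := fun z => -(Real.pi : ℂ) ^ 2 +
      deriv (rowZetaReg τ) z + L.weierstrassPExcept 0 z)
      ((continuousAt_const.add (analyticAt_rowZetaReg_zero hτ).deriv.continuousAt).add
        (L.analyticAt_weierstrassPExcept 0).continuousAt)
    have h2 := h1.sub ((tendsto_mul_piCot.add_const 1).mul tendsto_piCot_sub_inv)
    simp only [mul_zero, sub_zero] at h2
    refine h2.congr' ?_
    filter_upwards [eventually_deriv_rowZeta hτ, self_mem_nhdsWithin] with z hz hz0
    have hz0 : z ≠ 0 := hz0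
    have hP := L.weierstrassPExcept_add 0 z
    simp only [ZeroMemClass.coe_zero] at hP
    rw [hz, ← hP]
    field_simp
    ring

lemma hasSum_wpd {τ : ℂ} (hτ : 0 < τ.im) (z : ℂ) :
    HasSum (fun w : ℤ × ℤ => -2 / (z + (w.1 + w.2 * τ)) ^ 3) (wpd τ z) := by
  set L := upperPeriodPair τ hτ with hL
  have h := ((Equiv.neg _).trans L.latticeEquivProd.symm.toEquiv).hasSum_iff.mpr
    (L.hasSum_derivWeierstrassP z)
  rw [wpd_eq_derivWeierstrassP hτ]
  convert! h using 1
  funext w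
  have hterm : ((L.latticeEquivProd.symm w : L.lattice) : ℂ) = w.1 + w.2 * τ := by
    simpa [hL, upperPeriodPair] using L.latticeEquiv_symm_apply w
  simp only [Function.comp_apply, Equiv.trans_apply, Equiv.neg_apply, LinearEquiv.coe_toEquiv,
    map_neg, NegMemClass.coe_neg, hterm, sub_neg_eq_add]

/-- The duplication formula for `℘′`. -/
lemma sum_wpd_add_halfp {τ : ℂ} (hτ : 0 < τ.im) (z : ℂ) :
    ∑ k : Fin 4, wpd τ (z + halfp τ k / 2) = 8 * wpd τ (2 * z) := by
  set e : (Fin 2 × Fin 2) × (ℤ × ℤ) ≃ ℤ × ℤ := (Equiv.prodComm _ _).trans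
    ((Equiv.prodProdProdComm ℤ ℤ (Fin 2) (Fin 2)).trans
      (Equiv.prodCongr (Int.divModEquiv 2).symm (Int.divModEquiv 2).symm)) with he
  have h := (e.hasSum_iff.mpr (hasSum_wpd hτ (2 * z))).mul_left 8
  have hfib : ∀ r : Fin 2 × Fin 2, HasSum (fun w : ℤ × ℤ => 8 *
      ((fun w : ℤ × ℤ => -2 / (2 * z + (w.1 + w.2 * τ)) ^ 3) ∘ e) (r, w))
      (wpd τ (z + ((r.1 : ℕ) + (r.2 : ℕ) * τ) / 2)) := by
    intro r
    convert! hasSum_wpd hτ (z + ((r.1 : ℕ) + (r.2 : ℕ) * τ) / 2) using 1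
    funext w
    have : 2 * z + (((e (r, w)).1 : ℂ) + ((e (r, w)).2 : ℂ) * τ) =
        2 * (z + ((r.1 : ℕ) + (r.2 : ℕ) * τ) / 2 + (w.1 + w.2 * τ)) := by
      simp [he, Int.divModEquiv]
      ring
    simp only [Function.comp_apply, this, mul_pow]
    rw [← mul_div_assoc, show (2 : ℂ) ^ 3 = 8 by norm_num, mul_div_mul_left _ _ (by norm_num)]
  have hsum := (h.prod_fiberwise hfib).unique (hasSum_fintype _)
  rw [hsum, Fintype.sum_prod_type, Fin.sum_univ_four, Fin.sum_univ_two, Fin.sum_univ_two,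
    Fin.sum_univ_two]
  simp [halfp]
  ring

lemma InLattice.neg {τ z : ℂ} (hz : InLattice τ z) : InLattice τ (-z) := by
  obtain ⟨m, n, rfl⟩ := hz
  exact ⟨-m, -n, by push_cast; ring⟩

lemma InLattice.of_add_one {τ z : ℂ} (hz : InLattice τ (z + 1)) : InLattice τ z := by
  obtain ⟨m, n, h⟩ := hz
  exact ⟨m - 1, n, by push_cast; linear_combination h⟩

lemma isOpen_not_inLattice {τ : ℂ} (hτ : 0 < τ.im) : IsOpen {z | ¬ InLattice τ z} := by
  have : {z | ¬ InLattice τ z} = ((upperPeriodPair τ hτ).lattice : Set ℂ)ᶜ := by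
    ext z
    simp [mem_upperPeriodPair_lattice]
  rw [this]
  exact (upperPeriodPair τ hτ).isClosed_lattice.isOpen_compl

lemma isConnected_not_inLattice (τ : ℂ) : IsConnected {z | ¬ InLattice τ z} := by
  have : {z | ¬ InLattice τ z} = (Set.range fun w : ℤ × ℤ => (w.1 : ℂ) + w.2 * τ)ᶜ := by
    ext z
    simp [InLattice, eq_comm]
  rw [this]
  exact (Set.countable_range _).isConnected_compl_of_one_lt_rank (by simp)

/-- The row sum of the Weierstrass zeta function is `ζ(z) - η₁ z`. -/
lemma rowZeta_eq_zeta_sub {zeta : ℂ → ℂ → ℂ} {eta1 : ℂ → ℂ} (hzeta : IsWeierstrassZeta zeta)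
    (heta1 : IsEta1 zeta eta1) {τ : ℂ} (hτ : 0 < τ.im) {z : ℂ} (hz : ¬ InLattice τ z) :
    rowZeta τ z = zeta τ z - z * eta1 τ ∧ HasDerivAt (rowZeta τ) (-wp τ z - eta1 τ) z := by
  obtain ⟨κ, hκ⟩ := exists_deriv_rowZeta_add_wp hτ
  obtain ⟨hodd, hder, -⟩ := hzeta τ hτ
  have hE : ∀ w, ¬ InLattice τ w → HasDerivAt (rowZeta τ) (κ - wp τ w) w := fun w hw => by
    rw [← hκ w hw, add_sub_cancel_right]
    exact (analyticAt_rowZeta hτ hw).differentiableAt.hasDerivAt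
  have hd : ∀ w, ¬ InLattice τ w →
      HasDerivAt (fun w => rowZeta τ w - zeta τ w - κ * w) 0 w := fun w hw => by
    refine (((hE w hw).sub (hder w hw)).sub ((hasDerivAt_id w).const_mul κ)).congr_deriv ?_
    ring
  have hconst : ∀ w, ¬ InLattice τ w → rowZeta τ w - zeta τ w - κ * w = 0 := fun w hw => by
    have h := (isOpen_not_inLattice hτ).is_const_of_deriv_eq_zero
      (isConnected_not_inLattice τ).isPreconnected
      (fun u hu => (hd u hu).differentiableAt.differentiableWithinAt)
      (fun u hu => (hd u hu).deriv) (show w ∈ {z | ¬ InLattice τ z} from hw)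
      (show -w ∈ {z | ¬ InLattice τ z} from fun h => hw (by simpa using h.neg))
    simp only [rowZeta_neg, hodd] at h
    linear_combination h / 2
  have hη : eta1 τ = -κ := by
    have h1 := hconst z hz
    have h2 := hconst (z + 1) fun h => hz h.of_add_one
    have h3 : rowZeta τ (z + 1) = rowZeta τ z := periodic_rowSeries _ _ z
    rw [heta1 τ hτ z hz]
    linear_combination h3 + h1 - h2
  refine ⟨by rw [hη]; linear_combination hconst z hz, ?_⟩
  exact (hE z hz).congr_deriv (by rw [hη]; ring)

/-- The heat equation for `log θ₁`, differentiated once in `z`. -/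
lemma deriv_rowMoment {zeta : ℂ → ℂ → ℂ} {eta1 : ℂ → ℂ} (hzeta : IsWeierstrassZeta zeta)
    (heta1 : IsEta1 zeta eta1) {τ : ℂ} (hτ : 0 < τ.im) {z : ℂ} (hz : ¬ InLattice τ z) :
    deriv (rowMoment τ) z = I / (4 * Real.pi) *
      (wpd τ z + 2 * (zeta τ z - z * eta1 τ) * (wp τ z + eta1 τ)) := by
  obtain ⟨K, hK⟩ := exists_rowMoment_eq hτ
  have hnhds := (isOpen_not_inLattice hτ).mem_nhds hz
  obtain ⟨hE, hE'⟩ := rowZeta_eq_zeta_sub hzeta heta1 hτ hz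
  have hwp : HasDerivAt (wp τ) (wpd τ z) z := by
    rw [wpd, funext (wp_eq_weierstrassP hτ)]
    exact ((upperPeriodPair τ hτ).analyticOnNhd_weierstrassP z fun h =>
      hz ((mem_upperPeriodPair_lattice hτ).mp h)).differentiableAt.hasDerivAt
  have heq : rowMoment τ =ᶠ[𝓝 z] fun w => K - I / (4 * Real.pi) *
      ((-wp τ w - eta1 τ) + rowZeta τ w ^ 2) := by
    filter_upwards [hnhds] with w hw
    rw [← hK w hw, (rowZeta_eq_zeta_sub hzeta heta1 hτ hw).2.deriv]
    ring
  have hd := (((hwp.neg.sub_const (eta1 τ)).add (hE'.pow 2)).const_mul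
    (I / (4 * Real.pi))).const_sub K
  rw [heq.deriv_eq]
  refine hd.deriv.trans ?_
  rw [hE]
  push_cast
  ring

/-- The derivative of `τ ↦ ζ(q(τ)) - η₁ q(τ)` along a holomorphic curve avoiding the lattices. -/
lemma hasDerivAt_rowZeta_comp {zeta : ℂ → ℂ → ℂ} {eta1 : ℂ → ℂ} (hzeta : IsWeierstrassZeta zeta)
    (heta1 : IsEta1 zeta eta1) {V : Set ℂ} (hV : IsOpen V) (hVH : ∀ τ ∈ V, 0 < τ.im) {q : ℂ → ℂ}
    (hq : DifferentiableOn ℂ q V) (hreg : ∀ τ ∈ V, ¬ InLattice τ (q τ)) {τ : ℂ} (hτ : τ ∈ V) :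
    HasDerivAt (fun s => rowZeta s (q s)) (deriv q τ * (-wp τ (q τ) - eta1 τ) +
      I / (4 * Real.pi) * (wpd τ (q τ) +
        2 * (zeta τ (q τ) - q τ * eta1 τ) * (wp τ (q τ) + eta1 τ))) τ := by
  obtain ⟨D, hD, hd⟩ := hasDerivAt_rowSeries_comp norm_one_le_abs_add_one hV hq
    (b := fun s => s) differentiableOn_id hVH
    (fun n _ s hs => add_mul_ne_intCast_of_not_inLattice (hreg s hs) n) hτ
  have hne := fun n => add_mul_ne_intCast_of_not_inLattice (hreg τ hτ) n
  have h0 := (differentiableAt_rowSeries norm_one_le_abs_add_one (hVH τ hτ) fun n _ => hne n).1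
  have h1 := (differentiableAt_rowSeries norm_intCast_le_abs_add_one (hVH τ hτ) fun n _ => hne n).1
  have hsum := (h0.mul_left (deriv q τ)).add h1
  have hDeq : D = deriv q τ * deriv (rowZeta τ) (q τ) + deriv (rowMoment τ) (q τ) := by
    refine hD.unique ?_
    convert! hsum using 1
    funext n
    simp
    ring
  rw [← (rowZeta_eq_zeta_sub hzeta heta1 (hVH τ hτ) (hreg τ hτ)).2.deriv,
    ← deriv_rowMoment hzeta heta1 (hVH τ hτ) (hreg τ hτ), ← hDeq]
  exact hd

/-- Theorem 4.1, one direction: a solution of the Hamiltonian system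
gives a solution of the elliptic form of Painlevé VI with `α_k = (1/2)(n_k + 1/2)²`. -/
theorem hamiltonian_system_implies_elliptic_PVI
    (n : Fin 4 → ℂ) (zeta : ℂ → ℂ → ℂ) (eta1 : ℂ → ℂ)
    (hzeta : IsWeierstrassZeta zeta) (heta1 : IsEta1 zeta eta1)
    (V : Set ℂ) (hVopen : IsOpen V) (hVconn : IsConnected V)
    (hVH : ∀ τ ∈ V, 0 < τ.im)
    (p A : ℂ → ℂ)
    (hpdiff : DifferentiableOn ℂ p V) (hAdiff : DifferentiableOn ℂ A V)
    (hreg : ∀ τ ∈ V, ¬ InLattice τ (2 * p τ) ∧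
      ∀ k : Fin 4, ¬ InLattice τ (p τ + halfp τ k / 2))
    (hham : HamSystem n zeta eta1 V p A) :
    ∀ τ ∈ V, HasDerivAt (deriv p)
      ((-1 / (4 * (Real.pi : ℂ) ^ 2)) *
        ∑ k : Fin 4, (1 / 2) * (n k + 1 / 2) ^ 2 * wpd τ (p τ + halfp τ k / 2)) τ := by
  intro τ hτ
  have hpi : (Real.pi : ℂ) ≠ 0 := by exact_mod_cast Real.pi_ne_zero
  obtain ⟨hp, hA⟩ := hham τ hτ
  have hE := hasDerivAt_rowZeta_comp hzeta heta1 hVopen hVH (hpdiff.const_mul 2)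
    (fun s hs => (hreg s hs).1) hτ
  rw [(hp.const_mul 2).deriv] at hE
  have heq : deriv p =ᶠ[𝓝 τ] fun s =>
      -I / (4 * Real.pi) * (2 * A s - rowZeta s (2 * p s)) := by
    filter_upwards [hVopen.mem_nhds hτ] with s hs
    rw [(hham s hs).1.deriv, (rowZeta_eq_zeta_sub hzeta heta1 (hVH s hs) (hreg s hs).1).1]
    ring
  refine HasDerivAt.congr_of_eventuallyEq ?_ heq
  refine (((hA.const_mul 2).sub hE).const_mul (-I / (4 * Real.pi))).congr_deriv ?_
  have hdup := sum_wpd_add_halfp (hVH τ hτ) (p τ)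
  have hsplit : ∑ k : Fin 4, (1 / 2) * (n k + 1 / 2) ^ 2 * wpd τ (p τ + halfp τ k / 2) =
      1 / 2 * ∑ k : Fin 4, n k * (n k + 1) * wpd τ (p τ + halfp τ k / 2) +
        wpd τ (2 * p τ) := by
    have : wpd τ (2 * p τ) = 1 / 8 * ∑ k : Fin 4, wpd τ (p τ + halfp τ k / 2) := by
      rw [hdup]; ring
    rw [this, Finset.mul_sum, Finset.mul_sum, ← Finset.sum_add_distrib]
    exact Finset.sum_congr rfl fun k _ => by ring
  rw [hsplit]
  generalize ∑ k : Fin 4, n k * (n k + 1) * wpd τ (p τ + halfp τ k / 2) = S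
  field_simp
  ring_nf
  simp only [I_sq]
  ring
end

section
/- Fix τ ∈ ℍ, parameters n₀,n₁,n₂,n₃, A, B ∈ ℂ, and p ∈ ℂ with p ∉ (1/2)Λ_τ (so that in particular 2p ∉ Λ_τ and p is not congruent to any half-period mod Λ_τ). Then the generalized Lamé equation y″ = I(z;τ)y has, near the regular singular point p, a fundamental system of solutions of the form y₁(z) = (z−p)^{−1/2}h₁(z), y₂(z) = (z−p)^{3/2}h₂(z) with h₁, h₂ holomorphic at p and h₁(p) ≠ 0, h₂(p) ≠ 0 (i.e. no solution has a logarithmic singularity at p; equivalently ±p are apparent singularities) if and only if B = A² − ζ(2p|τ)A − (3/4)℘(2p|τ) − Σ_{k=0}^{3} n_k(n_k+1)℘(p + ω_k/2|τ). -/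
open Complex Filter Topology Asymptotics

/-- The period pair `(1, τ)`. -/
noncomputable def unitPeriodPair (τ : ℂ) (hτ : 0 < τ.im) : PeriodPair where
  ω₁ := 1
  ω₂ := τ
  indep := by
    rw [LinearIndependent.pair_iff]
    intro s t h
    have him := congrArg Complex.im h
    have hre := congrArg Complex.re h
    simp at him hre
    rcases him with h0 | h0
    · subst h0
      exact ⟨by simpa using hre, rfl⟩
    · exact absurd h0 hτ.ne'

lemma mem_unitPeriodPair_lattice {τ z : ℂ} (hτ : 0 < τ.im) :
    z ∈ (unitPeriodPair τ hτ).lattice ↔ InLattice τ z := by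
  simp [PeriodPair.mem_lattice, InLattice, unitPeriodPair, eq_comm]

/-- Every point has a punctured neighbourhood free of lattice points. -/
lemma eventually_nhdsNE_not_inLattice {τ : ℂ} (hτ : 0 < τ.im) (z : ℂ) :
    ∀ᶠ w in 𝓝[≠] z, ¬ InLattice τ w := by
  filter_upwards [nhdsWithin_le_nhds
    ((unitPeriodPair τ hτ).compl_lattice_sdiff_singleton_mem_nhds z),
    self_mem_nhdsWithin] with w hw hwz hwL
  exact hw ⟨(mem_unitPeriodPair_lattice hτ).mpr hwL, hwz⟩

/-- `℘(z|τ) - z⁻²` extends to a function that is analytic away from the nonzero lattice points and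
vanishes at the origin. -/
lemma exists_wp_eq_inv_sq_add {τ : ℂ} (hτ : 0 < τ.im) :
    ∃ P : ℂ → ℂ, P 0 = 0 ∧ (∀ z, (InLattice τ z → z = 0) → AnalyticAt ℂ P z) ∧
      ∀ z, wp τ z = z⁻¹ ^ 2 + P z := by
  let L := unitPeriodPair τ hτ
  refine ⟨L.weierstrassPExcept 0, ?_, fun z hz => ?_, fun z => ?_⟩
  · simp [PeriodPair.weierstrassPExcept]
  · refine (L.differentiableOn_weierstrassPExcept 0).analyticAt
      (L.isOpen_compl_lattice_sdiff.mem_nhds ?_)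
    rintro ⟨hzL, hz0⟩
    exact hz0 (hz ((mem_unitPeriodPair_lattice hτ).mp hzL))
  · rw [wp, PeriodPair.weierstrassPExcept, ← L.latticeEquivProd.symm.toEquiv.tsum_eq]
    congr 1
    have hsub := tsum_subtype {w : ℤ × ℤ | w ≠ 0} (fun w : ℤ × ℤ =>
      (z - ((w.1 : ℂ) + (w.2 : ℂ) * τ))⁻¹ ^ 2 - ((w.1 : ℂ) + (w.2 : ℂ) * τ)⁻¹ ^ 2)
    refine hsub.trans (tsum_congr fun w => ?_)
    have hcoe : ((L.latticeEquivProd.symm w : L.lattice) : ℂ) = (w.1 : ℂ) + (w.2 : ℂ) * τ := by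
      rw [L.latticeEquiv_symm_apply]
      simp [L, unitPeriodPair]
    by_cases hw : w = 0
    · subst hw
      simp
    · have hne : ((L.latticeEquivProd.symm w : L.lattice) : ℂ) ≠ 0 := by simpa using hw
      simp only [LinearEquiv.coe_toEquiv, if_neg hne]
      rw [Set.indicator_of_mem (show w ∈ {w : ℤ × ℤ | w ≠ 0} from hw), hcoe]
      simp

/-- `ζ(z|τ)` is analytic off the lattice. -/
lemma IsWeierstrassZeta.analyticAt {zeta : ℂ → ℂ → ℂ} (hzeta : IsWeierstrassZeta zeta) {τ z : ℂ}
    (hτ : 0 < τ.im) (hz : ¬ InLattice τ z) : AnalyticAt ℂ (zeta τ) z := by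
  have hev : ∀ᶠ w in 𝓝 z, ¬ InLattice τ w := by
    rw [← nhdsNE_sup_pure, eventually_sup, eventually_pure]
    exact ⟨eventually_nhdsNE_not_inLattice hτ z, hz⟩
  exact analyticAt_iff_eventually_differentiableAt.mpr
    (hev.mono fun w hw => ((hzeta τ hτ).2.1 w hw).differentiableAt)

/-- `ζ(z|τ) - z⁻¹` is analytic at the origin. -/
lemma IsWeierstrassZeta.analyticAt_sub_inv {zeta : ℂ → ℂ → ℂ} (hzeta : IsWeierstrassZeta zeta)
    {τ : ℂ} (hτ : 0 < τ.im) : AnalyticAt ℂ (fun z => zeta τ z - z⁻¹) 0 := by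
  obtain ⟨hodd, hderiv, hlim⟩ := hzeta τ hτ
  refine Complex.analyticAt_of_differentiable_on_punctured_nhds_of_continuousAt ?_ ?_
  · filter_upwards [eventually_nhdsNE_not_inLattice hτ 0, self_mem_nhdsWithin] with z hz hz0
    exact (hderiv z hz).differentiableAt.sub (differentiableAt_inv hz0)
  · have h0 : zeta τ 0 = 0 := by
      have := hodd 0
      rw [neg_zero] at this
      exact self_eq_neg.mp this
    rw [continuousAt_iff_punctured_nhds]
    simpa [h0] using hlim

/-- The terms of a power series with geometrically bounded coefficients. -/
lemma norm_mul_pow_le_of_norm_le_geometric {a : ℕ → ℂ} {C S : ℝ} (hS : 0 < S)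
    (ha : ∀ k, ‖a k‖ ≤ C * S ^ k) {x : ℂ} (hx : x ∈ Metric.ball (0 : ℂ) (1 / (2 * S))) (k : ℕ) :
    ‖a k * x ^ k‖ ≤ C * (1 / 2) ^ k := by
  rw [mem_ball_zero_iff] at hx
  have hC : 0 ≤ C := by simpa using (norm_nonneg _).trans (ha 0)
  have hSx : S * ‖x‖ ≤ 1 / 2 := by
    calc S * ‖x‖ ≤ S * (1 / (2 * S)) := by gcongr
      _ = 1 / 2 := by field_simp
  calc ‖a k * x ^ k‖ = ‖a k‖ * ‖x‖ ^ k := by rw [norm_mul, norm_pow]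
    _ ≤ C * S ^ k * ‖x‖ ^ k := by gcongr; exact ha k
    _ = C * (S * ‖x‖) ^ k := by rw [mul_pow, mul_assoc]
    _ ≤ C * (1 / 2) ^ k := by gcongr

lemma summable_geometric_half_mul (C : ℝ) : Summable fun k : ℕ => C * (1 / 2 : ℝ) ^ k :=
  summable_geometric_two.mul_left C

/-- A power series with geometrically bounded coefficients is differentiable near the origin. -/
lemma differentiableOn_tsum_mul_pow {a : ℕ → ℂ} {C S : ℝ} (hS : 0 < S)
    (ha : ∀ k, ‖a k‖ ≤ C * S ^ k) :
    DifferentiableOn ℂ (fun x => ∑' k, a k * x ^ k) (Metric.ball 0 (1 / (2 * S))) :=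
  differentiableOn_tsum_of_summable_norm (summable_geometric_half_mul C)
    (fun k => by fun_prop) Metric.isOpen_ball
    (fun k _ hx => norm_mul_pow_le_of_norm_le_geometric hS ha hx k)

/-- The Euler operator `x d/dx` multiplies the `k`-th coefficient of a power series by `k`. -/
lemma hasSum_mul_deriv_tsum_mul_pow {a : ℕ → ℂ} {C S : ℝ} (hS : 0 < S)
    (ha : ∀ k, ‖a k‖ ≤ C * S ^ k) {x : ℂ} (hx : x ∈ Metric.ball (0 : ℂ) (1 / (2 * S))) :
    HasSum (fun k : ℕ => (k * a k) * x ^ k) (x * deriv (fun x => ∑' k, a k * x ^ k) x) := by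
  have h := (hasSum_deriv_of_summable_norm (F := fun (k : ℕ) x => a k * x ^ k)
    (summable_geometric_half_mul C) (fun k => by fun_prop) Metric.isOpen_ball
    (fun k _ hx => norm_mul_pow_le_of_norm_le_geometric hS ha hx k) hx).mul_left x
  convert! h using 2 with k
  rw [deriv_const_mul_field, deriv_pow_field]
  cases k with
  | zero => simp
  | succ k =>
    rw [Nat.add_sub_cancel]
    ring

/-- Coefficients of the Frobenius solution, normalized by `a 0 = 1`, of
`x² h″ + c x h′ + (∑ qₖ xᵏ) h = 0`. -/
noncomputable def frobeniusCoeff (c : ℤ) (q : ℕ → ℂ) : ℕ → ℂ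
  | 0 => 1
  | k + 1 => -(∑ j : Fin (k + 1), frobeniusCoeff c q j * q (k + 1 - j)) /
      (((k + 1 : ℕ) * ((k + 1 : ℕ) - 1 + c) : ℤ) : ℂ)

lemma frobeniusCoeff_succ (c : ℤ) (q : ℕ → ℂ) (k : ℕ) :
    frobeniusCoeff c q (k + 1) =
      -(∑ j ∈ Finset.range (k + 1), frobeniusCoeff c q j * q (k + 1 - j)) /
        (((k + 1 : ℕ) * ((k + 1 : ℕ) - 1 + c) : ℤ) : ℂ) := by
  rw [frobeniusCoeff, Finset.sum_range]

/-- The Frobenius coefficients grow at most geometrically. -/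
lemma exists_norm_frobeniusCoeff_le (c : ℤ) {q : ℕ → ℂ} {M ρ : ℝ} (hρ : 0 < ρ)
    (hq : ∀ k, ‖q k‖ ≤ M * ρ ^ k) :
    ∃ S > 0, ∀ k, ‖frobeniusCoeff c q k‖ ≤ 1 * S ^ k := by
  have hM : 0 ≤ M := by simpa using (norm_nonneg _).trans (hq 0)
  set a := frobeniusCoeff c q
  set b : ℕ → ℝ := fun k => ∑ j ∈ Finset.range (k + 1), ‖a j‖ * ρ⁻¹ ^ j with hb
  have hstep : ∀ k, ‖a (k + 1)‖ ≤ M * b k * ρ ^ (k + 1) := by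
    intro k
    have hden : ∀ d : ℤ, ∀ w : ℂ, ‖w / (d : ℂ)‖ ≤ ‖w‖ := by
      intro d w
      rcases eq_or_ne d 0 with rfl | hd
      · simp
      · rw [norm_div]
        refine div_le_self (norm_nonneg _) ?_
        rw [Complex.norm_intCast]
        exact_mod_cast Int.one_le_abs hd
    rw [show a (k + 1) = _ from frobeniusCoeff_succ c q k]
    refine (hden _ _).trans ?_
    rw [norm_neg, hb, Finset.mul_sum, Finset.sum_mul]
    refine (norm_sum_le _ _).trans (Finset.sum_le_sum fun j hj => ?_)
    have hjk : j ≤ k + 1 := (Finset.mem_range.mp hj).le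
    calc ‖a j * q (k + 1 - j)‖ ≤ ‖a j‖ * (M * ρ ^ (k + 1 - j)) := by
          rw [norm_mul]
          gcongr
          exact hq _
      _ = M * (‖a j‖ * ρ⁻¹ ^ j) * ρ ^ (k + 1) := by
          rw [pow_sub₀ _ hρ.ne' hjk, inv_pow]
          ring
  have hbk : ∀ k, b k ≤ (1 + M) ^ k := by
    intro k
    induction k with
    | zero => simp [hb, a, frobeniusCoeff]
    | succ k ih =>
      have hlast : ‖a (k + 1)‖ * ρ⁻¹ ^ (k + 1) ≤ M * b k := by
        calc ‖a (k + 1)‖ * ρ⁻¹ ^ (k + 1) ≤ M * b k * ρ ^ (k + 1) * ρ⁻¹ ^ (k + 1) := by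
              gcongr
              exact hstep k
          _ = M * b k := by rw [mul_assoc, ← mul_pow, mul_inv_cancel₀ hρ.ne', one_pow, mul_one]
      calc b (k + 1) = b k + ‖a (k + 1)‖ * ρ⁻¹ ^ (k + 1) := Finset.sum_range_succ _ _
        _ ≤ (1 + M) * b k := by linarith
        _ ≤ (1 + M) * (1 + M) ^ k := by gcongr
        _ = (1 + M) ^ (k + 1) := by ring
  refine ⟨(1 + M) * ρ, by positivity, fun k => ?_⟩
  have hle : ‖a k‖ * ρ⁻¹ ^ k ≤ (1 + M) ^ k :=
    (Finset.single_le_sum (f := fun j => ‖a j‖ * ρ⁻¹ ^ j) (fun j _ => by positivity)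
      (Finset.self_mem_range_succ k)).trans (hbk k)
  calc ‖a k‖ = ‖a k‖ * ρ⁻¹ ^ k * ρ ^ k := by
        rw [mul_assoc, ← mul_pow, inv_mul_cancel₀ hρ.ne', one_pow, mul_one]
    _ ≤ (1 + M) ^ k * ρ ^ k := by gcongr
    _ = 1 * ((1 + M) * ρ) ^ k := by rw [mul_pow, one_mul]

/-- The coefficients of a power series converging near the origin are geometrically bounded. -/
lemma exists_norm_le_geometric_of_eventually_summable {q : ℕ → ℂ}
    (hq : ∀ᶠ x in 𝓝 (0 : ℂ), Summable fun k => q k * x ^ k) :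
    ∃ M ρ : ℝ, 0 < ρ ∧ ∀ k, ‖q k‖ ≤ M * ρ ^ k := by
  obtain ⟨x, hx, hx0⟩ := ((hq.filter_mono nhdsWithin_le_nhds).and
    (self_mem_nhdsWithin : {(0 : ℂ)}ᶜ ∈ 𝓝[≠] 0)).exists
  obtain ⟨M, hM⟩ := hx.tendsto_atTop_zero.norm.bddAbove_range
  have hxpos : 0 < ‖x‖ := norm_pos_iff.mpr hx0
  refine ⟨M, ‖x‖⁻¹, by positivity, fun k => ?_⟩
  have hk : ‖q k * x ^ k‖ ≤ M := hM ⟨k, rfl⟩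
  rw [norm_mul, norm_pow] at hk
  rwa [inv_pow, ← div_eq_mul_inv, le_div_iff₀ (by positivity)]

/-- Frobenius' theorem for `x² h″ + c x h′ + G h = 0` with `c` an integer and `G 0 = 0`: in the
absence of an obstruction at the resonant index there is an analytic solution with `h 0 = 1`. -/
lemma exists_frobenius_solution (c : ℤ) {q : ℕ → ℂ} {G : ℂ → ℂ} (hq0 : q 0 = 0)
    (hG : ∀ᶠ x in 𝓝 (0 : ℂ), HasSum (fun k => q k * x ^ k) (G x))
    (hres : ∀ k : ℕ, (k : ℤ) + c = 0 →
      ∑ j ∈ Finset.range (k + 1), frobeniusCoeff c q j * q (k + 1 - j) = 0) :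
    ∃ h : ℂ → ℂ, AnalyticAt ℂ h 0 ∧ h 0 = 1 ∧
      ∀ᶠ x in 𝓝 (0 : ℂ), x ^ 2 * deriv (deriv h) x + c * x * deriv h x + G x * h x = 0 := by
  obtain ⟨M, ρ, hρ, hq⟩ :=
    exists_norm_le_geometric_of_eventually_summable (hG.mono fun x hx => hx.summable)
  obtain ⟨S, hS, ha⟩ := exists_norm_frobeniusCoeff_le c hρ hq
  set a := frobeniusCoeff c q with ha_def
  have hrec : ∀ k : ℕ, (k : ℂ) * (k - 1 + c) * a k +
      ∑ j ∈ Finset.range (k + 1), a j * q (k - j) = 0 := by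
    rintro (_ | k)
    · simp [hq0]
    · rw [Finset.sum_range_succ, Nat.sub_self, hq0, mul_zero, add_zero, ha_def]
      by_cases hk : (k : ℤ) + c = 0
      · rw [hres k hk]
        have hkc : (k : ℂ) + c = 0 := by exact_mod_cast hk
        push_cast
        linear_combination ((k : ℂ) + 1) * frobeniusCoeff c q (k + 1) * hkc
      · have hne : (((k + 1 : ℕ) * ((k + 1 : ℕ) - 1 + c) : ℤ) : ℂ) ≠ 0 := by
          refine Int.cast_ne_zero.mpr (mul_ne_zero (by positivity) ?_)
          push_cast
          simpa using hk
        have hsucc := frobeniusCoeff_succ c q k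
        rw [eq_div_iff hne] at hsucc
        push_cast at hsucc ⊢
        linear_combination hsucc
  have hb : ∀ k : ℕ, ‖(k : ℂ) * a k‖ ≤ 1 * (2 * S) ^ k := by
    intro k
    have hk2 : (k : ℝ) ≤ 2 ^ k := by exact_mod_cast Nat.lt_two_pow_self.le
    rw [norm_mul, Complex.norm_natCast, mul_pow, one_mul]
    exact mul_le_mul hk2 (by simpa using ha k) (norm_nonneg _) (by positivity)
  set h : ℂ → ℂ := fun x => ∑' k, a k * x ^ k with hh
  have hball : Metric.ball (0 : ℂ) (1 / (2 * S)) ∈ 𝓝 (0 : ℂ) :=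
    Metric.ball_mem_nhds _ (by positivity)
  have hball' : Metric.ball (0 : ℂ) (1 / (2 * (2 * S))) ∈ 𝓝 (0 : ℂ) :=
    Metric.ball_mem_nhds _ (by positivity)
  have hballq : Metric.ball (0 : ℂ) (1 / (2 * ρ)) ∈ 𝓝 (0 : ℂ) :=
    Metric.ball_mem_nhds _ (by positivity)
  have hdiff := differentiableOn_tsum_mul_pow hS ha
  refine ⟨h, hdiff.analyticAt hball, ?_, ?_⟩
  · rw [hh]
    dsimp only
    rw [tsum_eq_single 0 (by intro k hk; simp [hk])]
    simp [ha_def, frobeniusCoeff]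
  filter_upwards [hG, hball, hball', hballq] with x hGx hx hx' hxq
  have hfirst := hasSum_mul_deriv_tsum_mul_pow hS ha hx
  have hsecond := hasSum_mul_deriv_tsum_mul_pow (by positivity) hb hx'
  have hderiv : deriv (fun x => ∑' k : ℕ, (k * a k) * x ^ k) x =
      deriv h x + x * deriv (deriv h) x := by
    have hev : (fun x => ∑' k : ℕ, (k * a k) * x ^ k) =ᶠ[𝓝 x] fun x => x * deriv h x := by
      filter_upwards [Metric.isOpen_ball.mem_nhds hx] with y hy
      exact (hasSum_mul_deriv_tsum_mul_pow hS ha hy).tsum_eq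
    have hd : DifferentiableAt ℂ (deriv h) x :=
      (hdiff.analyticAt (Metric.isOpen_ball.mem_nhds hx)).deriv.differentiableAt
    rw [hev.deriv_eq]
    simpa using ((hasDerivAt_id' x).fun_mul hd.hasDerivAt).deriv
  rw [hderiv] at hsecond
  have hna : Summable fun k => ‖a k * x ^ k‖ :=
    .of_nonneg_of_le (fun _ => norm_nonneg _) (norm_mul_pow_le_of_norm_le_geometric hS ha hx)
      (summable_geometric_half_mul 1)
  have hnq : Summable fun k => ‖q k * x ^ k‖ :=
    .of_nonneg_of_le (fun _ => norm_nonneg _) (norm_mul_pow_le_of_norm_le_geometric hρ hq hxq)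
      (summable_geometric_half_mul M)
  have hprod := hasSum_sum_range_mul_of_summable_norm hna hnq
  rw [hGx.tsum_eq] at hprod
  have hsum := (hsecond.add (hfirst.mul_left ((c : ℂ) - 1))).add hprod
  have hterm : ∀ k : ℕ, k * (k * a k) * x ^ k + (c - 1) * (k * a k * x ^ k) +
      ∑ j ∈ Finset.range (k + 1), a j * x ^ j * (q (k - j) * x ^ (k - j)) = 0 := by
    intro k
    have hconv : ∑ j ∈ Finset.range (k + 1), a j * x ^ j * (q (k - j) * x ^ (k - j)) =
        (∑ j ∈ Finset.range (k + 1), a j * q (k - j)) * x ^ k := by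
      rw [Finset.sum_mul]
      refine Finset.sum_congr rfl fun j hj => ?_
      rw [← pow_mul_pow_sub x (Nat.lt_succ_iff.mp (Finset.mem_range.mp hj))]
      ring
    rw [hconv]
    linear_combination x ^ k * hrec k
  simp only [hterm] at hsum
  have hzero := hsum.unique hasSum_zero
  change _ + _ * (x * deriv h x) + h x * G x = 0 at hzero
  linear_combination hzero

/-- Near `p` the generalized Lamé potential has the form `3/4 (z-p)⁻² - A (z-p)⁻¹ + F` with `F`
analytic at `p`. -/
lemma exists_Ipot_expansion {τ : ℂ} (hτ : 0 < τ.im) (n : Fin 4 → ℂ) (A B : ℂ) {p : ℂ}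
    {zeta : ℂ → ℂ → ℂ} (hzeta : IsWeierstrassZeta zeta) (hp : ¬ InLattice τ (2 * p)) :
    ∃ F : ℂ → ℂ, AnalyticAt ℂ F p ∧
      F p = (∑ k : Fin 4, n k * (n k + 1) * wp τ (p + halfp τ k / 2)) +
        (3 / 4) * wp τ (2 * p) + zeta τ (2 * p) * A + B ∧
      ∀ z, z ≠ p → 3 / 4 - (z - p) ^ 2 * Ipot n zeta A B p τ z =
        A * (z - p) - (z - p) ^ 2 * F z := by
  obtain ⟨P, hP0, hPan, hwp⟩ := exists_wp_eq_inv_sq_add hτ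
  have hwpan : ∀ z, ¬ InLattice τ z → AnalyticAt ℂ (wp τ) z := by
    intro z hz
    have hz0 : z ≠ 0 := by
      rintro rfl
      exact hz ⟨0, 0, by simp⟩
    rw [funext hwp]
    exact ((analyticAt_id.fun_inv hz0).fun_pow 2).fun_add (hPan z fun h => absurd h hz)
  have hhalf : ∀ k, ¬ InLattice τ (p + halfp τ k / 2) := by
    rintro k ⟨a, b, hab⟩
    have h2 : 2 * p = 2 * (a + b * τ) - halfp τ k := by linear_combination 2 * hab
    apply hp
    fin_cases k
    · exact ⟨2 * a, 2 * b, by rw [h2]; simp [halfp]; ring⟩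
    · exact ⟨2 * a - 1, 2 * b, by rw [h2]; simp [halfp]; ring⟩
    · exact ⟨2 * a, 2 * b - 1, by rw [h2]; simp [halfp]; ring⟩
    · exact ⟨2 * a - 1, 2 * b - 1, by rw [h2]; simp [halfp]; ring⟩
  have hzeta0 : zeta τ 0 = 0 := by simpa [self_eq_neg] using (hzeta τ hτ).1 0
  refine ⟨fun z => (∑ k : Fin 4, n k * (n k + 1) * wp τ (z + halfp τ k / 2)) +
    (3 / 4) * (wp τ (z + p) + P (z - p)) +
    A * (zeta τ (z + p) - (zeta τ (z - p) - (z - p)⁻¹)) + B, ?_, ?_, ?_⟩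
  · have hsum : AnalyticAt ℂ
        (fun z => ∑ k : Fin 4, n k * (n k + 1) * wp τ (z + halfp τ k / 2)) p := by
      refine Finset.analyticAt_fun_sum _ fun k _ => analyticAt_const.fun_mul ?_
      exact (hwpan _ (hhalf k)).fun_comp_of_eq (by fun_prop) rfl
    have hwpp : AnalyticAt ℂ (fun z => wp τ (z + p)) p :=
      (hwpan _ hp).fun_comp_of_eq (by fun_prop) (by ring)
    have hzetap : AnalyticAt ℂ (fun z => zeta τ (z + p)) p :=
      (hzeta.analyticAt hτ hp).fun_comp_of_eq (by fun_prop) (by ring)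
    have hPp : AnalyticAt ℂ (fun z => P (z - p)) p :=
      (hPan 0 fun _ => rfl).fun_comp_of_eq (by fun_prop) (by ring)
    have hzetam : AnalyticAt ℂ (fun z => zeta τ (z - p) - (z - p)⁻¹) p :=
      (hzeta.analyticAt_sub_inv hτ).fun_comp_of_eq (f := fun z => z - p) (by fun_prop) (by ring)
    exact ((hsum.fun_add (analyticAt_const.fun_mul (hwpp.fun_add hPp))).fun_add
      (analyticAt_const.fun_mul (hzetap.fun_sub hzetam))).fun_add analyticAt_const
  · simp only [sub_self, hP0, hzeta0, inv_zero, ← two_mul]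
    ring
  · intro z hz
    have hzp : z - p ≠ 0 := sub_ne_zero.mpr hz
    rw [Ipot, hwp (z - p)]
    field_simp
    ring

/-- A nonvanishing analytic solution at the exponent `-1/2` forces the absence of a logarithm. -/
lemma eq_sq_of_analytic_solution {h F : ℂ → ℂ} {p A : ℂ} (hh : AnalyticAt ℂ h p)
    (hF : AnalyticAt ℂ F p) (hhp : h p ≠ 0)
    (heq : ∀ᶠ z in 𝓝[≠] p, (z - p) ^ 2 * deriv (deriv h) z - (z - p) * deriv h z
      + (A * (z - p) - (z - p) ^ 2 * F z) * h z = 0) : F p = A ^ 2 := by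
  set E : ℂ → ℂ := fun z => (z - p) * deriv (deriv h) z - deriv h z + (A - (z - p) * F z) * h z
    with hE
  have hEd : HasDerivAt E (A * deriv h p - F p * h p) p := by
    have hid : HasDerivAt (fun z => z - p) 1 p := (hasDerivAt_id' p).sub_const p
    have h1 := hh.differentiableAt.hasDerivAt
    have h2 := hh.deriv.differentiableAt.hasDerivAt
    have h3 := hh.deriv.deriv.differentiableAt.hasDerivAt
    have h4 := hF.differentiableAt.hasDerivAt
    convert! ((hid.fun_mul h3).fun_sub h2).fun_add (((hid.fun_mul h4).const_sub A).fun_mul h1)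
      using 1
    simp
    ring
  have hE0 : ∀ᶠ z in 𝓝[≠] p, E z = 0 := by
    filter_upwards [heq, self_mem_nhdsWithin] with z hz hzp
    refine (mul_eq_zero.mp ?_).resolve_left (sub_ne_zero.mpr hzp)
    rw [← hz, hE]
    ring
  have hE0' : E =ᶠ[𝓝 p] fun _ => 0 :=
    (hEd.continuousAt.eventuallyEq_nhds_iff_eventuallyEq_nhdsNE continuousAt_const).mp hE0
  have hval : E p = 0 := hE0'.eq_of_nhds
  have hder : A * deriv h p - F p * h p = 0 := by
    rw [← hEd.deriv, hE0'.deriv_eq, deriv_const]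
  simp only [hE, sub_self, zero_mul] at hval
  refine mul_right_cancel₀ hhp ?_
  linear_combination -hder - A * hval

/-- Frobenius' theorem at `p` for `(z-p)² h″ + c (z-p) h′ + (A (z-p) - (z-p)² F) h = 0`. -/
lemma exists_analytic_solution (c : ℤ) {F : ℂ → ℂ} {p A : ℂ} (hF : AnalyticAt ℂ F p)
    (hc : 0 < c ∨ c = -1 ∧ F p = A ^ 2) :
    ∃ h : ℂ → ℂ, AnalyticAt ℂ h p ∧ h p ≠ 0 ∧
      ∀ᶠ z in 𝓝 p, (z - p) ^ 2 * deriv (deriv h) z + c * (z - p) * deriv h z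
        + (A * (z - p) - (z - p) ^ 2 * F z) * h z = 0 := by
  obtain ⟨s, hs⟩ := hF
  have hs0 : s.coeff 0 = F p := hs.coeff_zero _
  rw [hasFPowerSeriesAt_iff] at hs
  let q : ℕ → ℂ
    | 0 => 0
    | 1 => A
    | k + 2 => -s.coeff k
  have hq : ∀ᶠ x in 𝓝 (0 : ℂ), HasSum (fun k => q k * x ^ k) (A * x - x ^ 2 * F (p + x)) := by
    filter_upwards [hs] with x hx
    rw [← hasSum_nat_add_iff' 2]
    convert! hx.mul_left (-x ^ 2) using 1
    · ext k
      simp only [q, smul_eq_mul]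
      ring
    · simp [Finset.sum_range_succ, q]
  obtain ⟨g, hg, hg0, hgeq⟩ := exists_frobenius_solution c (q := q) rfl hq (by
    intro k hk
    rcases hc with hc | ⟨rfl, hFp⟩
    · omega
    · obtain rfl : k = 1 := by omega
      simp [Finset.sum_range_succ, frobeniusCoeff_succ, q, hs0, hFp, frobeniusCoeff]
      ring)
  have hsub : Tendsto (fun z => z - p) (𝓝 p) (𝓝 0) := by
    simpa using (show Continuous fun z : ℂ => z - p by fun_prop).tendsto p
  refine ⟨fun z => g (z - p), hg.fun_comp_of_eq (by fun_prop) (by ring), by simp [hg0], ?_⟩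
  filter_upwards [hsub.eventually hgeq] with z hz
  have hd : deriv (fun z => g (z - p)) = fun z => deriv g (z - p) :=
    funext fun z => deriv_comp_sub_const ..
  rw [hd, deriv_comp_sub_const (f := deriv g)]
  simpa using hz

/-- Lemma 2.1: `±p` are apparent singularities of the generalized Lamé
equation `y″ = I(z;τ)y`, i.e. near `p` there is a fundamental system
`y₁ = (z-p)^{-1/2}h₁, y₂ = (z-p)^{3/2}h₂` with `h₁, h₂` holomorphic and nonvanishing at `p`
(the condition on `h_i` below is the exact ODE obtained by substituting `y = (z-p)^σ h` with
`σ = -1/2` resp. `σ = 3/2` into `y″ = I y`), if and only if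
`B = A² - ζ(2p)A - (3/4)℘(2p) - Σ n_k(n_k+1)℘(p + ω_k/2)`. -/
theorem apparent_singularity_iff
    (τ : ℂ) (hτ : 0 < τ.im) (n : Fin 4 → ℂ) (A B p : ℂ)
    (zeta : ℂ → ℂ → ℂ) (hzeta : IsWeierstrassZeta zeta)
    (hp : ¬ InLattice τ (2 * p)) :
    (∃ r > (0 : ℝ), ∃ h₁ h₂ : ℂ → ℂ,
      AnalyticOnNhd ℂ h₁ (Metric.ball p r) ∧ AnalyticOnNhd ℂ h₂ (Metric.ball p r) ∧
      h₁ p ≠ 0 ∧ h₂ p ≠ 0 ∧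
      (∀ z ∈ Metric.ball p r, z ≠ p →
        (z - p) ^ 2 * deriv (deriv h₁) z - (z - p) * deriv h₁ z
          + (3 / 4 - (z - p) ^ 2 * Ipot n zeta A B p τ z) * h₁ z = 0 ∧
        (z - p) ^ 2 * deriv (deriv h₂) z + 3 * (z - p) * deriv h₂ z
          + (3 / 4 - (z - p) ^ 2 * Ipot n zeta A B p τ z) * h₂ z = 0))
    ↔ B = A ^ 2 - zeta τ (2 * p) * A - (3 / 4) * wp τ (2 * p)
        - ∑ k : Fin 4, n k * (n k + 1) * wp τ (p + halfp τ k / 2) := by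
  obtain ⟨F, hF, hFp, hI⟩ := exists_Ipot_expansion hτ n A B hzeta hp
  have hB : (B = A ^ 2 - zeta τ (2 * p) * A - (3 / 4) * wp τ (2 * p)
      - ∑ k : Fin 4, n k * (n k + 1) * wp τ (p + halfp τ k / 2)) ↔ F p = A ^ 2 := by
    rw [hFp]
    constructor <;> intro h <;> linear_combination h
  rw [hB]
  constructor
  · rintro ⟨r, hr, h₁, h₂, han₁, -, hne₁, -, heq⟩
    refine eq_sq_of_analytic_solution (han₁ p (Metric.mem_ball_self hr)) hF hne₁ ?_
    filter_upwards [nhdsWithin_le_nhds (Metric.ball_mem_nhds p hr), self_mem_nhdsWithin]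
      with z hz hzp
    rw [← hI z hzp]
    exact (heq z hz hzp).1
  · intro h
    obtain ⟨h₁, han₁, hne₁, heq₁⟩ := exists_analytic_solution (-1) hF (Or.inr ⟨rfl, h⟩)
    obtain ⟨h₂, han₂, hne₂, heq₂⟩ :=
      exists_analytic_solution (A := A) 3 hF (Or.inl (by norm_num))
    obtain ⟨r, hr, hball⟩ := Metric.eventually_nhds_iff_ball.mp
      ((han₁.eventually_analyticAt.and han₂.eventually_analyticAt).and (heq₁.and heq₂))
    refine ⟨r, hr, h₁, h₂, fun z hz => (hball z hz).1.1, fun z hz => (hball z hz).1.2, hne₁, hne₂,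
      fun z hz hzp => ?_⟩
    obtain ⟨-, e₁, e₂⟩ := hball z hz
    push_cast at e₁ e₂
    rw [hI z hzp]
    exact ⟨by linear_combination e₁, e₂⟩
end
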